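/- arXiv:2604.05752 — 2 statements merged into one kernel-verified Lean document; each statement's English description precedes it below -/
import Mathlib

section
/- Let D ⊆ ℝ × ℝ be open, φ : D → ℝ twice continuously differentiable, and κ : ℝ → ℝ a function such that the curvature satisfies 𝒦(x,u) = κ(x) for all (x,u) ∈ D. Then for every solution f of u' = φ(x,u) on an interval I, the function p_f(x) := ∂ᵤφ(x, f(x)) satisfies the Riccati equation p_f'(x) + p_f(x)² + κ(x) = 0 for all x ∈ I. -/
/-- Partial derivative of `φ` with respect to the second (dependent) variable `u`. -/
noncomputable def pderivU (φ : ℝ × ℝ → ℝ) (x u : ℝ) : ℝ :=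
  deriv (fun v => φ (x, v)) u

/-- Partial derivative of `φ` with respect to the first (independent) variable `x`. -/
noncomputable def pderivX (φ : ℝ × ℝ → ℝ) (x u : ℝ) : ℝ :=
  deriv (fun t => φ (t, u)) x

/-- Mixed second partial derivative `∂ₓ∂ᵤφ`. -/
noncomputable def pderivXU (φ : ℝ × ℝ → ℝ) (x u : ℝ) : ℝ :=
  deriv (fun t => pderivU φ t u) x

/-- Second partial derivative `∂ᵤ∂ᵤφ`. -/
noncomputable def pderivUU (φ : ℝ × ℝ → ℝ) (x u : ℝ) : ℝ :=
  deriv (fun v => pderivU φ x v) u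

/-- The curvature `𝒦(x,u) := −(∂ₓ∂ᵤφ(x,u) + (∂ᵤφ(x,u))² + φ(x,u)·∂ᵤ∂ᵤφ(x,u))`
of the ODE `u' = φ(x,u)`. -/
noncomputable def curvature (φ : ℝ × ℝ → ℝ) (x u : ℝ) : ℝ :=
  -(pderivXU φ x u + (pderivU φ x u) ^ 2 + φ (x, u) * pderivUU φ x u)

/-!
The total derivative of `∂ᵤφ` along the vector field `(1, φ)` is `∂ₓ∂ᵤφ + φ·∂ᵤ∂ᵤφ`, that is,
`-((∂ᵤφ)² + 𝒦)`. The graph of a solution is an integral curve of this field, so the chain rule gives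
`p_f' = -(p_f² + 𝒦(x, f(x)))`, which is a Riccati equation as soon as `𝒦` depends on `x` alone.
-/

section PartialDerivatives

variable {𝕜 E F : Type*} [NontriviallyNormedField 𝕜]
  [NormedAddCommGroup E] [NormedSpace 𝕜 E] [NormedAddCommGroup F] [NormedSpace 𝕜 F]

theorem deriv_comp_prodMk_left {g : 𝕜 × E → F} {x : 𝕜} {u : E}
    (hg : DifferentiableAt 𝕜 g (x, u)) :
    deriv (fun t => g (t, u)) x = fderiv 𝕜 g (x, u) (1, 0) :=
  (hg.hasFDerivAt.comp_hasDerivAt x ((hasDerivAt_id x).prodMk (hasDerivAt_const x u))).deriv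

theorem deriv_comp_prodMk_right {g : E × 𝕜 → F} {x : E} {u : 𝕜}
    (hg : DifferentiableAt 𝕜 g (x, u)) :
    deriv (fun v => g (x, v)) u = fderiv 𝕜 g (x, u) (0, 1) :=
  (hg.hasFDerivAt.comp_hasDerivAt u ((hasDerivAt_const u x).prodMk (hasDerivAt_id u))).deriv

theorem contDiffAt_deriv_snd {g : E × 𝕜 → F} {p : E × 𝕜} {m n : WithTop ℕ∞}
    (hg : ContDiffAt 𝕜 n g p) (hmn : m + 1 ≤ n) :
    ContDiffAt 𝕜 m (fun q : E × 𝕜 => deriv (fun v => g (q.1, v)) q.2) p := by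
  have hfderiv : ContDiffAt 𝕜 m (fun q => fderiv 𝕜 g q (0, 1)) p :=
    (hg.fderiv_right hmn).clm_apply contDiffAt_const
  have hnear : ∀ᶠ q in nhds p, ContDiffAt 𝕜 1 g q :=
    (hg.of_le (le_add_self.trans hmn)).eventually (by simp)
  refine hfderiv.congr_of_eventuallyEq (hnear.mono fun q hq => ?_)
  exact deriv_comp_prodMk_right (hq.differentiableAt one_ne_zero)

theorem hasDerivWithinAt_comp_graph {g : 𝕜 × 𝕜 → F} {f : 𝕜 → 𝕜} {f' x : 𝕜} {s : Set 𝕜}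
    (hg : DifferentiableAt 𝕜 g (x, f x)) (hf : HasDerivWithinAt f f' s x) :
    HasDerivWithinAt (fun t => g (t, f t))
      (deriv (fun t => g (t, f x)) x + f' • deriv (fun v => g (x, v)) (f x)) s x := by
  have hgraph : HasDerivWithinAt (fun t => (t, f t)) (1, f') s x :=
    (hasDerivWithinAt_id x s).prodMk hf
  have hsplit : ((1, f') : 𝕜 × 𝕜) = (1, 0) + f' • (0, 1) := by simp
  rw [deriv_comp_prodMk_left hg, deriv_comp_prodMk_right hg, ← map_smul, ← map_add, ← hsplit]
  exact hg.hasFDerivAt.comp_hasDerivWithinAt (f := fun t => (t, f t)) x hgraph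

end PartialDerivatives

theorem stmt_1_general {φ : ℝ × ℝ → ℝ} {f : ℝ → ℝ} {s : Set ℝ} {x : ℝ}
    (hφ : ContDiffAt ℝ 2 φ (x, f x)) (hf : HasDerivWithinAt f (φ (x, f x)) s x) :
    HasDerivWithinAt (fun t => pderivU φ t (f t))
      (-((pderivU φ x (f x)) ^ 2 + curvature φ x (f x))) s x := by
  have hφu : DifferentiableAt ℝ (fun q : ℝ × ℝ => pderivU φ q.1 q.2) (x, f x) :=
    (contDiffAt_deriv_snd (m := 1) hφ one_add_one_eq_two.le).differentiableAt one_ne_zero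
  have hcurv : -((pderivU φ x (f x)) ^ 2 + curvature φ x (f x)) =
      pderivXU φ x (f x) + φ (x, f x) * pderivUU φ x (f x) := by
    rw [curvature]
    ring
  rw [hcurv]
  exact hasDerivWithinAt_comp_graph hφu hf

/-- If the curvature of `u' = φ(x,u)` satisfies `𝒦(x,u) = κ(x)` on `D`,
then along every solution `f`, the function `p_f(x) := ∂ᵤφ(x, f(x))` satisfies the Riccati
equation `p_f' + p_f² + κ = 0`. -/
theorem stmt_1 (D : Set (ℝ × ℝ)) (hD : IsOpen D)
    (φ : ℝ × ℝ → ℝ) (hφ : ContDiffOn ℝ 2 φ D)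
    (κ : ℝ → ℝ) (hκ : ∀ x u : ℝ, (x, u) ∈ D → curvature φ x u = κ x)
    (I : Set ℝ) (hI : IsOpen I) (f : ℝ → ℝ)
    (hfD : ∀ x ∈ I, (x, f x) ∈ D)
    (hf : ∀ x ∈ I, HasDerivAt f (φ (x, f x)) x) :
    ∀ x ∈ I, HasDerivAt (fun t => pderivU φ t (f t))
      (-((pderivU φ x (f x)) ^ 2 + κ x)) x := by
  intro x hx
  rw [← hκ x (f x) (hfD x hx)]
  exact (stmt_1_general (hφ.contDiffAt (hD.mem_nhds (hfD x hx)))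
    (hf x hx).hasDerivWithinAt).hasDerivAt (hI.mem_nhds hx)
end

section
/- Let D ⊆ ℝ × ℝ be open, φ : D → ℝ twice continuously differentiable, and κ : ℝ → ℝ a function such that the curvature satisfies 𝒦(x,u) = κ(x) for all (x,u) ∈ D. Define C(x,u) := ∂ₓφ(x,u) + φ(x,u)·∂ᵤφ(x,u) + κ(x)·u on D. Then ∂ᵤC(x,u) = 0 for every (x,u) ∈ D; in particular, if for each x the fiber D_x = {u : (x,u) ∈ D} is an interval, then C(x,u) depends only on x. -/
/-!
For fixed `x`, Schwarz's theorem `∂ᵤ∂ₓφ = ∂ₓ∂ᵤφ` and the product rule give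
`∂ᵤ(∂ₓφ + φ ∂ᵤφ) = ∂ₓ∂ᵤφ + (∂ᵤφ)² + φ ∂ᵤ∂ᵤφ = -𝒦`. So a curvature `κ(x)` is cancelled exactly by
adding `κ(x) u`, and the sum is constant on every fiber that is an interval.
-/

open Topology Function

section SecondDerivative

variable {𝕜 E F : Type*} [NontriviallyNormedField 𝕜] [NormedAddCommGroup E] [NormedSpace 𝕜 E]
  [NormedAddCommGroup F] [NormedSpace 𝕜 F] {f : E → F} {p : E}

theorem eventually_differentiableAt_of_contDiffAt {n : WithTop ℕ∞} (hf : ContDiffAt 𝕜 n f p)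
    (hn : 1 ≤ n) : ∀ᶠ q in 𝓝 p, DifferentiableAt 𝕜 f q :=
  ((hf.of_le hn).eventually (by simp)).mono fun _ hq => hq.differentiableAt one_ne_zero

theorem differentiableAt_fderiv_of_contDiffAt {n : WithTop ℕ∞} (hf : ContDiffAt 𝕜 n f p)
    (hn : 2 ≤ n) : DifferentiableAt 𝕜 (fderiv 𝕜 f) p :=
  (hf.fderiv_right (one_add_one_eq_two.trans_le hn)).differentiableAt one_ne_zero

theorem fderiv_fderiv_apply (hf : DifferentiableAt 𝕜 (fderiv 𝕜 f) p) (v w : E) :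
    fderiv 𝕜 (fun q => fderiv 𝕜 f q v) p w = fderiv 𝕜 (fderiv 𝕜 f) p w v := by
  simp [fderiv_clm_apply hf (differentiableAt_const v)]

theorem fderiv_fderiv_apply_comm (hf : DifferentiableAt 𝕜 (fderiv 𝕜 f) p)
    (hsymm : IsSymmSndFDerivAt 𝕜 f p) (v w : E) :
    fderiv 𝕜 (fun q => fderiv 𝕜 f q v) p w = fderiv 𝕜 (fun q => fderiv 𝕜 f q w) p v := by
  rw [fderiv_fderiv_apply hf, fderiv_fderiv_apply hf, hsymm.eq]

end SecondDerivative

section PartialDerivatives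

variable {φ : ℝ × ℝ → ℝ} {p : ℝ × ℝ} {x u : ℝ}

theorem pderivX_eq_fderiv (hφ : DifferentiableAt ℝ φ (x, u)) :
    pderivX φ x u = fderiv ℝ φ (x, u) (1, 0) :=
  (hφ.hasFDerivAt.comp_hasDerivAt x ((hasDerivAt_id x).prodMk (hasDerivAt_const x u))).deriv

theorem hasDerivAt_pderivU (hφ : DifferentiableAt ℝ φ (x, u)) :
    HasDerivAt (fun v => φ (x, v)) (pderivU φ x u) u :=
  (hφ.comp u ((differentiableAt_const x).prodMk differentiableAt_id)).hasDerivAt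

theorem pderivU_eq_fderiv (hφ : DifferentiableAt ℝ φ (x, u)) :
    pderivU φ x u = fderiv ℝ φ (x, u) (0, 1) :=
  (hφ.hasFDerivAt.comp_hasDerivAt u ((hasDerivAt_const u x).prodMk (hasDerivAt_id u))).deriv

theorem uncurry_pderivX_eventuallyEq (hφ : ∀ᶠ q in 𝓝 p, DifferentiableAt ℝ φ q) :
    uncurry (pderivX φ) =ᶠ[𝓝 p] fun q => fderiv ℝ φ q (1, 0) :=
  hφ.mono fun _ => pderivX_eq_fderiv

theorem uncurry_pderivU_eventuallyEq (hφ : ∀ᶠ q in 𝓝 p, DifferentiableAt ℝ φ q) :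
    uncurry (pderivU φ) =ᶠ[𝓝 p] fun q => fderiv ℝ φ q (0, 1) :=
  hφ.mono fun _ => pderivU_eq_fderiv

theorem differentiableAt_uncurry_pderivX (hφ : ContDiffAt ℝ 2 φ p) :
    DifferentiableAt ℝ (uncurry (pderivX φ)) p :=
  ((differentiableAt_fderiv_of_contDiffAt hφ le_rfl).clm_apply
    (differentiableAt_const _)).congr_of_eventuallyEq
    (uncurry_pderivX_eventuallyEq (eventually_differentiableAt_of_contDiffAt hφ one_le_two))

theorem differentiableAt_uncurry_pderivU (hφ : ContDiffAt ℝ 2 φ p) :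
    DifferentiableAt ℝ (uncurry (pderivU φ)) p :=
  ((differentiableAt_fderiv_of_contDiffAt hφ le_rfl).clm_apply
    (differentiableAt_const _)).congr_of_eventuallyEq
    (uncurry_pderivU_eventuallyEq (eventually_differentiableAt_of_contDiffAt hφ one_le_two))

theorem pderivU_pderivX_eq_pderivXU (hφ : ContDiffAt ℝ 2 φ (x, u)) :
    pderivU (uncurry (pderivX φ)) x u = pderivXU φ x u := by
  have hdiff := eventually_differentiableAt_of_contDiffAt hφ one_le_two
  calc
    pderivU (uncurry (pderivX φ)) x u = fderiv ℝ (uncurry (pderivX φ)) (x, u) (0, 1) :=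
      pderivU_eq_fderiv (differentiableAt_uncurry_pderivX hφ)
    _ = fderiv ℝ (fun q => fderiv ℝ φ q (1, 0)) (x, u) (0, 1) := by
      rw [(uncurry_pderivX_eventuallyEq hdiff).fderiv_eq]
    _ = fderiv ℝ (fun q => fderiv ℝ φ q (0, 1)) (x, u) (1, 0) :=
      fderiv_fderiv_apply_comm (differentiableAt_fderiv_of_contDiffAt hφ le_rfl)
        (hφ.isSymmSndFDerivAt (by simp)) _ _
    _ = fderiv ℝ (uncurry (pderivU φ)) (x, u) (1, 0) := by
      rw [(uncurry_pderivU_eventuallyEq hdiff).fderiv_eq]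
    -- `pderivXU φ` is definitionally `pderivX (uncurry (pderivU φ))`.
    _ = pderivXU φ x u := (pderivX_eq_fderiv (differentiableAt_uncurry_pderivU hφ)).symm

end PartialDerivatives

section Curvature

variable {φ : ℝ × ℝ → ℝ} {x u : ℝ}

/-- The total derivative `∂ₓφ + φ ∂ᵤφ` of `φ` along the ODE `u' = φ(x,u)`, that is, the second
derivative `u''` of a solution passing through `(x, u)`. -/
noncomputable def totalDeriv (φ : ℝ × ℝ → ℝ) (x u : ℝ) : ℝ :=
  pderivX φ x u + φ (x, u) * pderivU φ x u

theorem hasDerivAt_totalDeriv (hφ : ContDiffAt ℝ 2 φ (x, u)) :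
    HasDerivAt (totalDeriv φ x) (-curvature φ x u) u := by
  have hX : HasDerivAt (pderivX φ x) (pderivXU φ x u) u :=
    pderivU_pderivX_eq_pderivXU hφ ▸ hasDerivAt_pderivU (differentiableAt_uncurry_pderivX hφ)
  have hφu : HasDerivAt (fun v => φ (x, v)) (pderivU φ x u) u :=
    hasDerivAt_pderivU (hφ.differentiableAt two_ne_zero)
  have hU : HasDerivAt (pderivU φ x) (pderivUU φ x u) u :=
    hasDerivAt_pderivU (differentiableAt_uncurry_pderivU hφ)
  refine (hX.add (hφu.mul hU)).congr_deriv ?_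
  rw [curvature]
  ring

theorem hasDerivAt_totalDeriv_add_mul (hφ : ContDiffAt ℝ 2 φ (x, u)) (c : ℝ) :
    HasDerivAt (fun v => totalDeriv φ x v + c * v) (c - curvature φ x u) u :=
  ((hasDerivAt_totalDeriv hφ).add (hasDerivAt_const_mul c)).congr_deriv (neg_add_eq_sub _ _)

end Curvature

/-- If `𝒦(x,u) = κ(x)` on `D`, then the function
`C(x,u) := ∂ₓφ(x,u) + φ(x,u)·∂ᵤφ(x,u) + κ(x)·u` satisfies `∂ᵤC(x,u) = 0` on `D`;
in particular, if each fiber `D_x` is an interval, then `C` depends only on `x`. -/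
theorem stmt_3 (D : Set (ℝ × ℝ)) (hD : IsOpen D)
    (φ : ℝ × ℝ → ℝ) (hφ : ContDiffOn ℝ 2 φ D)
    (κ : ℝ → ℝ) (hκ : ∀ x u : ℝ, (x, u) ∈ D → curvature φ x u = κ x) :
    (∀ x u : ℝ, (x, u) ∈ D →
      deriv (fun v => pderivX φ x v + φ (x, v) * pderivU φ x v + κ x * v) u = 0) ∧
    ((∀ x : ℝ, Set.OrdConnected {u : ℝ | (x, u) ∈ D}) →
      ∀ x u₁ u₂ : ℝ, (x, u₁) ∈ D → (x, u₂) ∈ D →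
        pderivX φ x u₁ + φ (x, u₁) * pderivU φ x u₁ + κ x * u₁ =
          pderivX φ x u₂ + φ (x, u₂) * pderivU φ x u₂ + κ x * u₂) := by
  have hC : ∀ x u, (x, u) ∈ D → HasDerivAt (fun v => totalDeriv φ x v + κ x * v) 0 u := by
    intro x u hxu
    have hderiv := hasDerivAt_totalDeriv_add_mul (hφ.contDiffAt (hD.mem_nhds hxu)) (κ x)
    rwa [hκ x u hxu, sub_self] at hderiv
  refine ⟨fun x u hxu => (hC x u hxu).deriv, fun hfiber x u₁ u₂ h₁ h₂ => ?_⟩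
  have fiber_open : IsOpen {u : ℝ | (x, u) ∈ D} := hD.preimage (.prodMk_right x)
  exact fiber_open.is_const_of_deriv_eq_zero (hfiber x).isPreconnected
    (fun u hu => (hC x u hu).differentiableAt.differentiableWithinAt)
    (fun u hu => (hC x u hu).deriv) h₁ h₂
end
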